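/- Let D be a nonprincipal ultrafilter on ℕ, let Z' = ⟨S', P', C', I'⟩ be the ultrapower of Z with respect to D, and let x be the equivalence class modulo D of the sequence (id_{n,0})_{n∈ℕ}. Then x ∈ I', the set of y ∈ I' such that the pair (x,y) is splitable is infinite, and there is no member X of the term algebra of Z' such that X splits (x,y) for every y ∈ I' for which (x,y) is splitable. -/

import Mathlib

open FirstOrder FirstOrder.Language

/-- Relation symbols of the language of atom structures: a unary `I`,
a binary `C` and a ternary `P`. -/
inductive AtomRel : ℕ → Type
  | I : AtomRel 1
  | C : AtomRel 2
  | P : AtomRel 3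

/-- The first-order language with one ternary relation symbol `P`, one binary
relation symbol `C` and one unary relation symbol `I`. -/
def atomLang : FirstOrder.Language :=
  ⟨fun _ => Empty, AtomRel⟩

/-- Function symbols of the language of the term algebras: a constant `1'`,
unary symbols `−` (complement) and `⁻` (converse), binary symbols `+` and `;`. -/
inductive AlgFun : ℕ → Type
  | one : AlgFun 0
  | compl : AlgFun 1
  | conv : AlgFun 1
  | add : AlgFun 2
  | comp : AlgFun 2

/-- The first-order language with binary operations `+` and `;`, unary
operations `−` and `⁻`, and a constant `1'`. -/
def algLang : FirstOrder.Language :=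
  ⟨AlgFun, fun _ => Empty⟩

section Generic

variable {M : Type} [atomLang.Structure M]

/-- The interpretation of the unary relation symbol `I`. -/
def mI (a : M) : Prop := Structure.RelMap (L := atomLang) (AtomRel.I : atomLang.Relations 1) ![a]

/-- The interpretation of the binary relation symbol `C`. -/
def mC (a b : M) : Prop := Structure.RelMap (L := atomLang) (AtomRel.C : atomLang.Relations 2) ![a, b]

/-- The interpretation of the ternary relation symbol `P`. -/
def mP (a b c : M) : Prop := Structure.RelMap (L := atomLang) (AtomRel.P : atomLang.Relations 3) ![a, b, c]

/-- `X ; Y = {u : ∃ x ∈ X, y ∈ Y, P(x,y,u)}`. -/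
def sComp (X Y : Set M) : Set M := {u | ∃ x ∈ X, ∃ y ∈ Y, mP x y u}

/-- `X⁻ = {u : ∃ x ∈ X, C(x,u)}`. -/
def sConv (X : Set M) : Set M := {u | ∃ x ∈ X, mC x u}

/-- The set of elements satisfying `I`. -/
def idSet (M : Type) [atomLang.Structure M] : Set M := {a | mI a}

end Generic

/-- Membership in the term algebra: the smallest collection of subsets of `M`
containing all singletons and the set `I`, closed under binary union,
complementation, `;` and `⁻`. -/
inductive InTA (M : Type) [atomLang.Structure M] : Set M → Prop
  | sing (a : M) : InTA M {a}
  | idset : InTA M (idSet M)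
  | union {X Y : Set M} : InTA M X → InTA M Y → InTA M (X ∪ Y)
  | compl {X : Set M} : InTA M X → InTA M Xᶜ
  | comp {X Y : Set M} : InTA M X → InTA M Y → InTA M (sComp X Y)
  | conv {X : Set M} : InTA M X → InTA M (sConv X)

/-- The term algebra of an atom structure, as a type. -/
def TermAlg (M : Type) [atomLang.Structure M] : Type := {X : Set M // InTA M X}

/-- The term algebra as a structure in the language `algLang`:
`+` is union, `−` is complement, `;` and `⁻` are the operations defined from
`P` and `C`, and `1'` is the set `I`. -/
instance termAlgStructure (M : Type) [atomLang.Structure M] :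
    algLang.Structure (TermAlg M) where
  funMap := fun {_} f v =>
    match f with
    | .one => ⟨idSet M, InTA.idset⟩
    | .compl => ⟨(v 0).1ᶜ, InTA.compl (v 0).2⟩
    | .conv => ⟨sConv (v 0).1, InTA.conv (v 0).2⟩
    | .add => ⟨(v 0).1 ∪ (v 1).1, InTA.union (v 0).2 (v 1).2⟩
    | .comp => ⟨sComp (v 0).1 (v 1).1, InTA.comp (v 0).2 (v 1).2⟩
  RelMap := fun {_} r _ => r.elim

/-- `a` goes from `x` to `y` when `P(x,a,a)` and `P(a,y,a)`. -/
def goes {M : Type} [atomLang.Structure M] (a x y : M) : Prop := mP x a a ∧ mP a y a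

/-- `X` splits the pair `(x,y)` when some `a ∈ X` and some `b ∉ X` both go
from `x` to `y`. -/
def SplitsG {M : Type} [atomLang.Structure M] (X : Set M) (x y : M) : Prop :=
  ∃ a ∈ X, ∃ b ∉ X, goes a x y ∧ goes b x y

/-- The pair `(x,y)` is splitable when `x ≠ y` and at least two distinct
elements go from `x` to `y`. -/
def SplitableG {M : Type} [atomLang.Structure M] (x y : M) : Prop :=
  x ≠ y ∧ ∃ a b : M, a ≠ b ∧ goes a x y ∧ goes b x y

/-- Converse of a binary relation, as a set of pairs. -/
def relConv {U : Type} (R : Set (U × U)) : Set (U × U) := {p | (p.2, p.1) ∈ R}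

/-- Composition of binary relations, as sets of pairs. -/
def relComp {U : Type} (R T : Set (U × U)) : Set (U × U) :=
  {p | ∃ w, (p.1, w) ∈ R ∧ (w, p.2) ∈ T}

/-- An atom structure is completely representable. -/
def CompRep (M : Type) [atomLang.Structure M] : Prop :=
  ∃ (U : Type) (rep : M → Set (U × U)),
    (∀ a : M, (rep a).Nonempty) ∧
    (∀ a b : M, a ≠ b → Disjoint (rep a) (rep b)) ∧
    (⋃ a : M, rep a) = Set.univ ∧
    (∀ a : M, (mI a ↔ rep a ⊆ Set.diagonal U) ∧
      ((rep a ⊆ Set.diagonal U) ↔ (rep a ∩ Set.diagonal U).Nonempty)) ∧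
    (∀ a b : M, (mC a b ↔ rep b = relConv (rep a)) ∧
      ((rep b = relConv (rep a)) ↔ (rep b ∩ relConv (rep a)).Nonempty)) ∧
    (∀ a b c : M, (mP a b c ↔ rep c ⊆ relComp (rep a) (rep b)) ∧
      ((rep c ⊆ relComp (rep a) (rep b)) ↔ (rep c ∩ relComp (rep a) (rep b)).Nonempty))
/-- The atoms of the atom structure `Z`: identity atoms `id n i` (`i ≤ n`),
split atoms `r n k` and their converses `rc n k` (`1 ≤ k ≤ n`), and
atoms `w n i m j` (`i ≤ n`, `j ≤ m`).  Distinct constructor applications give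
pairwise distinct elements. -/
inductive Atom : Type
  | id : (n i : ℕ) → i ≤ n → Atom
  | r : (n k : ℕ) → 1 ≤ k → k ≤ n → Atom
  | rc : (n k : ℕ) → 1 ≤ k → k ≤ n → Atom
  | w : (n i m j : ℕ) → i ≤ n → j ≤ m → Atom

/-- The domain function of `Z`. -/
def Atom.dom : Atom → Atom
  | .id n i h => .id n i h
  | .r n _ _ _ => .id n 0 (Nat.zero_le n)
  | .rc n k _ h2 => .id n k h2
  | .w n i _ _ hi _ => .id n i hi

/-- The range function of `Z`. -/
def Atom.rg : Atom → Atom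
  | .id n i h => .id n i h
  | .r n k _ h2 => .id n k h2
  | .rc n _ _ _ => .id n 0 (Nat.zero_le n)
  | .w _ _ m j _ hj => .id m j hj

/-- Membership in the set `I` of identity atoms of `Z`. -/
def Atom.isId : Atom → Prop
  | .id _ _ _ => True
  | _ => False

/-- The converse function on atoms of `Z`. -/
def Atom.cnv : Atom → Atom
  | .id n i h => .id n i h
  | .r n k h1 h2 => .rc n k h1 h2
  | .rc n k h1 h2 => .r n k h1 h2
  | .w n i m j hi hj => .w m j n i hj hi

/-- The binary relation `C` of `Z`: it consists of the pairs `(x,x)` for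
`x ∈ I`, `(r n k, rc n k)`, `(rc n k, r n k)` and `(w n i m j, w m j n i)`,
i.e. exactly the pairs `(a, cnv a)`. -/
def Crel (a b : Atom) : Prop := b = Atom.cnv a

/-- The ternary relation `P` of `Z`: the triples `(dom a, a, a)` and
`(a, rg a, a)` for `a ∈ S`, the triples `(a, b, dom a)` for `(a,b) ∈ C`, and
the triples `(a,b,c)` of non-identity atoms with `dom a = dom c`,
`rg a = dom b`, `rg b = rg c`. -/
def Prel (a b c : Atom) : Prop :=
  (a = b.dom ∧ c = b) ∨
  (b = a.rg ∧ c = a) ∨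
  (Crel a b ∧ c = a.dom) ∨
  (¬ a.isId ∧ ¬ b.isId ∧ ¬ c.isId ∧ a.dom = c.dom ∧ a.rg = b.dom ∧ b.rg = c.rg)

/-- `Z` as a structure for the language `atomLang`. -/
instance atomStructureZ : atomLang.Structure Atom where
  funMap := fun {_} f _ => f.elim
  RelMap := fun {_} r v =>
    match r with
    | AtomRel.I => (v 0).isId
    | AtomRel.C => Crel (v 0) (v 1)
    | AtomRel.P => Prel (v 0) (v 1) (v 2)

/-- `X ⊆ S` splits the pair `(x,y)` if there are `a ∈ X` and `b ∉ X` with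
`dom a = dom b = x` and `rg a = rg b = y`. -/
def Splits (X : Set Atom) (x y : Atom) : Prop :=
  ∃ a ∈ X, ∃ b ∉ X, a.dom = x ∧ a.rg = y ∧ b.dom = x ∧ b.rg = y

/-- The pair `(x,y)` is splitable if `x ≠ y` and there are two distinct
elements `a ≠ b` of `S` with `dom a = dom b = x` and `rg a = rg b = y`. -/
def Splitable (x y : Atom) : Prop :=
  x ≠ y ∧ ∃ a b : Atom, a ≠ b ∧ a.dom = x ∧ a.rg = y ∧ b.dom = x ∧ b.rg = y

/-- The ultrapower `Z'` of the atom structure `Z` with respect to an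
ultrafilter `D` on `J`. -/
def UPow (J : Type) (D : Ultrafilter J) : Type :=
  (D : Filter J).Product (fun _ : J => Atom)

/-- The ultraproduct structure on the ultrapower of `Z`. -/
instance uPowStructure (J : Type) (D : Ultrafilter J) : atomLang.Structure (UPow J D) :=
  inferInstanceAs (atomLang.Structure ((D : Filter J).Product fun _ : J => Atom))

namespace ZHelp

def swp (n k : ℕ) : Atom → Atom
  | .id a i h => .id a i h
  | .r a i h1 h2 => if a = n ∧ i = k then .w a 0 a i (Nat.zero_le _) h2 else .r a i h1 h2
  | .rc a i h1 h2 => if a = n ∧ i = k then .w a i a 0 h2 (Nat.zero_le _) else .rc a i h1 h2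
  | .w a i b j hi hj =>
      if h : 1 ≤ k ∧ a = n ∧ b = n ∧ i = 0 ∧ j = k then
        .r b j (by omega) hj
      else if h : 1 ≤ k ∧ a = n ∧ b = n ∧ i = k ∧ j = 0 then
        .rc a i (by omega) hi
      else .w a i b j hi hj

theorem swp_dom (n k : ℕ) (a : Atom) : (swp n k a).dom = a.dom := by
  cases a <;> simp only [swp] <;> split_ifs <;> simp only [Atom.dom, Atom.id.injEq] <;> grind

theorem swp_rg (n k : ℕ) (a : Atom) : (swp n k a).rg = a.rg := by
  cases a <;> simp only [swp] <;> split_ifs <;> simp only [Atom.rg, Atom.id.injEq] <;> grind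

theorem swp_isId (n k : ℕ) (a : Atom) : (swp n k a).isId ↔ a.isId := by
  cases a <;> simp only [swp] <;> split_ifs <;> simp only [Atom.isId]

theorem swp_cnv (n k : ℕ) (a : Atom) : swp n k a.cnv = (swp n k a).cnv := by
  cases a <;> simp only [swp, Atom.cnv] <;> grind [Atom.cnv]

theorem swp_swp (n k : ℕ) (a : Atom) : swp n k (swp n k a) = a := by
  cases a <;> simp only [swp] <;> grind [swp]

theorem swp_of_dom (n k : ℕ) (a : Atom) : swp n k a.dom = a.dom := by
  cases a <;> rfl

theorem swp_of_rg (n k : ℕ) (a : Atom) : swp n k a.rg = a.rg := by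
  cases a <;> rfl

theorem swp_P (n k : ℕ) {a b c : Atom} (h : Prel a b c) :
    Prel (swp n k a) (swp n k b) (swp n k c) := by
  rcases h with ⟨h1, h2⟩ | ⟨h1, h2⟩ | ⟨h1, h2⟩ | h
  · subst h1 h2
    exact Or.inl ⟨by rw [swp_of_dom, swp_dom], rfl⟩
  · subst h1 h2
    exact Or.inr (Or.inl ⟨by rw [swp_of_rg, swp_rg], rfl⟩)
  · unfold Crel at h1
    subst h1 h2
    exact Or.inr (Or.inr (Or.inl ⟨swp_cnv n k a, by rw [swp_of_dom, swp_dom]⟩))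
  · refine Or.inr (Or.inr (Or.inr ?_))
    simpa only [swp_dom, swp_rg, swp_isId] using h

theorem swp_moved {n k k' : ℕ} {a : Atom} (h : swp n k a ≠ a) (h' : swp n k' a ≠ a) :
    k = k' := by
  cases a <;> simp only [swp] at h h' <;> grind

/-- Only `r` and `w` go from `id n 0` to `id n k`. -/
theorem goes_swp {n k : ℕ} (hk : 1 ≤ k) (hkn : k ≤ n) {a b : Atom}
    (ha : a.dom = .id n 0 (Nat.zero_le n)) (ha' : a.rg = .id n k hkn)
    (hb : b.dom = .id n 0 (Nat.zero_le n)) (hb' : b.rg = .id n k hkn) (hab : a ≠ b) :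
    swp n k a = b := by
  cases a <;> cases b <;> simp [Atom.dom, Atom.rg] at ha ha' hb hb' <;> simp only [swp] <;> grind

theorem P_dom {x a : Atom} (hx : x.isId) : Prel x a a ↔ a.dom = x := by
  constructor
  · rintro (⟨h, -⟩ | ⟨h, h2⟩ | ⟨h, h2⟩ | h)
    · exact h.symm
    · rw [h2] at h ⊢; cases x <;> simp_all [Atom.isId, Atom.rg, Atom.dom]
    · subst h2; cases x <;> simp [Atom.isId, Atom.dom] at hx ⊢
    · exact absurd hx h.1
  · rintro rfl
    exact Or.inl ⟨rfl, rfl⟩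

theorem P_rg {y a : Atom} (hy : y.isId) : Prel a y a ↔ a.rg = y := by
  constructor
  · rintro (⟨h, h2⟩ | ⟨h, h2⟩ | ⟨h, h2⟩ | h)
    · rw [h2]; cases y <;> simp [Atom.isId, Atom.rg] at hy ⊢
    · exact h.symm
    · unfold Crel at h
      subst h
      cases a <;> simp_all [Atom.isId, Atom.cnv, Atom.dom, Atom.rg]
    · exact absurd hy h.2.1
  · rintro rfl
    exact Or.inr (Or.inl ⟨rfl, rfl⟩)

section gen
variable {M : Type} [atomLang.Structure M]

theorem inTA_inv {X : Set M} (h : InTA M X) :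
    ∃ F : Set M, F.Finite ∧ ∀ s : M → M, (∀ a, s (s a) = a) → (∀ a, mI a → mI (s a)) →
      (∀ a b, mC a b → mC (s a) (s b)) → (∀ a b c, mP a b c → mP (s a) (s b) (s c)) →
      (∀ a ∈ F, s a = a) → ∀ u ∈ X, s u ∈ X := by
  induction h with
  | sing a =>
    refine ⟨{a}, Set.finite_singleton a, ?_⟩
    rintro s - - - - hF u rfl
    exact hF u rfl
  | idset => exact ⟨∅, Set.finite_empty, fun s _ hI _ _ _ u hu => hI u hu⟩
  | union _ _ ih1 ih2 =>
    obtain ⟨F, hF, h1⟩ := ih1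
    obtain ⟨G, hG, h2⟩ := ih2
    refine ⟨F ∪ G, hF.union hG, fun s hs hI hC hP hFG u hu => ?_⟩
    rcases hu with hu | hu
    · exact Or.inl (h1 s hs hI hC hP (fun a ha => hFG a (Or.inl ha)) u hu)
    · exact Or.inr (h2 s hs hI hC hP (fun a ha => hFG a (Or.inr ha)) u hu)
  | compl _ ih =>
    obtain ⟨F, hF, h1⟩ := ih
    refine ⟨F, hF, fun s hs hI hC hP hFG u hu hu' => hu ?_⟩
    have := h1 s hs hI hC hP hFG _ hu'
    rwa [hs] at this
  | comp _ _ ih1 ih2 =>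
    obtain ⟨F, hF, h1⟩ := ih1
    obtain ⟨G, hG, h2⟩ := ih2
    refine ⟨F ∪ G, hF.union hG, fun s hs hI hC hP hFG u hu => ?_⟩
    obtain ⟨x, hx, y, hy, hxy⟩ := hu
    exact ⟨s x, h1 s hs hI hC hP (fun a ha => hFG a (Or.inl ha)) x hx,
      s y, h2 s hs hI hC hP (fun a ha => hFG a (Or.inr ha)) y hy, hP _ _ _ hxy⟩
  | conv _ ih =>
    obtain ⟨F, hF, h1⟩ := ih
    refine ⟨F, hF, fun s hs hI hC hP hFG u hu => ?_⟩
    obtain ⟨x, hx, hxu⟩ := hu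
    exact ⟨s x, h1 s hs hI hC hP hFG x hx, hC _ _ hxu⟩

end gen

variable {D : Ultrafilter ℕ}

def cls (D : Ultrafilter ℕ) (f : ℕ → Atom) : UPow ℕ D :=
  Quotient.mk ((D : Filter ℕ).productSetoid fun _ : ℕ => Atom) f

theorem cls_surj (a : UPow ℕ D) : ∃ f, cls D f = a := Quotient.exists_rep a

theorem cls_eq {f g : ℕ → Atom} : cls D f = cls D g ↔ ∀ᶠ n in (D : Filter ℕ), f n = g n :=
  Quotient.eq (r := (D : Filter ℕ).productSetoid fun _ : ℕ => Atom)

theorem mI_cls {f : ℕ → Atom} : mI (cls D f) ↔ ∀ᶠ n in (D : Filter ℕ), (f n).isId := by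
  have := @FirstOrder.Language.relMap_quotient_mk' atomLang _
    ((D : Filter ℕ).productSetoid fun _ : ℕ => Atom)
    (Ultraproduct.setoidPrestructure (L := atomLang) (fun _ : ℕ => Atom) D) _ (AtomRel.I : atomLang.Relations 1) ![f]
  rw [show (∀ᶠ n in (D : Filter ℕ), (f n).isId) ↔ _ from this.symm]
  unfold mI
  have e : (![cls D f] : Fin 1 → UPow ℕ D) = fun i => cls D ((![f] : Fin 1 → ℕ → Atom) i) := by
    funext i; fin_cases i <;> rfl
  rw [e]; rfl

theorem mC_cls {f g : ℕ → Atom} :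
    mC (cls D f) (cls D g) ↔ ∀ᶠ n in (D : Filter ℕ), Crel (f n) (g n) := by
  have := @FirstOrder.Language.relMap_quotient_mk' atomLang _
    ((D : Filter ℕ).productSetoid fun _ : ℕ => Atom)
    (Ultraproduct.setoidPrestructure (L := atomLang) (fun _ : ℕ => Atom) D) _ (AtomRel.C : atomLang.Relations 2) ![f, g]
  rw [show (∀ᶠ n in (D : Filter ℕ), Crel (f n) (g n)) ↔ _ from this.symm]
  unfold mC
  have e : (![cls D f, cls D g] : Fin 2 → UPow ℕ D) =
      fun i => cls D ((![f, g] : Fin 2 → ℕ → Atom) i) := by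
    funext i; fin_cases i <;> rfl
  rw [e]; rfl

theorem mP_cls {f g h : ℕ → Atom} :
    mP (cls D f) (cls D g) (cls D h) ↔ ∀ᶠ n in (D : Filter ℕ), Prel (f n) (g n) (h n) := by
  have := @FirstOrder.Language.relMap_quotient_mk' atomLang _
    ((D : Filter ℕ).productSetoid fun _ : ℕ => Atom)
    (Ultraproduct.setoidPrestructure (L := atomLang) (fun _ : ℕ => Atom) D) _ (AtomRel.P : atomLang.Relations 3) ![f, g, h]
  rw [show (∀ᶠ n in (D : Filter ℕ), Prel (f n) (g n) (h n)) ↔ _ from this.symm]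
  unfold mP
  have e : (![cls D f, cls D g, cls D h] : Fin 3 → UPow ℕ D) =
      fun i => cls D ((![f, g, h] : Fin 3 → ℕ → Atom) i) := by
    funext i; fin_cases i <;> rfl
  rw [e]; rfl

/-- The swap on the ultrapower. -/
noncomputable def sw (D : Ultrafilter ℕ) (k : ℕ) (a : UPow ℕ D) : UPow ℕ D :=
  cls D (fun n => swp n k (Classical.choose (cls_surj a) n))

theorem sw_cls (k : ℕ) (f : ℕ → Atom) : sw D k (cls D f) = cls D (fun n => swp n k (f n)) := by
  have := Classical.choose_spec (cls_surj (cls D f))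
  rw [cls_eq] at this
  unfold sw
  rw [cls_eq]
  filter_upwards [this] with n hn
  rw [hn]

def xseq : ℕ → Atom := fun n => .id n 0 (Nat.zero_le n)
def yseq (k : ℕ) : ℕ → Atom := fun n => .id n (min k n) (Nat.min_le_right _ _)
def wseq (k : ℕ) : ℕ → Atom := fun n => .w n 0 n (min k n) (Nat.zero_le _) (Nat.min_le_right _ _)

theorem xid (n : ℕ) : (xseq n).isId := trivial
theorem yid (k n : ℕ) : (yseq k n).isId := trivial

theorem goes_cls {f g h : ℕ → Atom} (hg : ∀ n, (g n).isId) (hh : ∀ n, (h n).isId) :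
    goes (cls D f) (cls D g) (cls D h) ↔
      ∀ᶠ n in (D : Filter ℕ), (f n).dom = g n ∧ (f n).rg = h n := by
  unfold goes
  rw [mP_cls, mP_cls, ← Filter.eventually_and]
  simp only [P_dom (hg _), P_rg (hh _)]

theorem ev_ge (hD : ∀ n : ℕ, D ≠ pure n) (k : ℕ) : ∀ᶠ n in (D : Filter ℕ), k ≤ n := by
  rcases D.le_cofinite_or_eq_pure with h | ⟨n, h⟩
  · rw [Nat.cofinite_eq_atTop] at h
    exact h (Filter.eventually_ge_atTop k)
  · exact absurd h (hD n)

theorem splitable (hD : ∀ n : ℕ, D ≠ pure n) {k : ℕ} (hk : 1 ≤ k) :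
    SplitableG (cls D xseq) (cls D (yseq k)) := by
  have hge := ev_ge hD k
  refine ⟨?_, cls D (wseq k), sw D k (cls D (wseq k)), ?_, ?_, ?_⟩
  · rw [Ne, cls_eq]
    intro h
    obtain ⟨n, h1, h2⟩ := (h.and hge).exists
    simp [xseq, yseq] at h1
    omega
  · rw [sw_cls, Ne, cls_eq]
    intro h
    obtain ⟨n, h1, h2⟩ := (h.and hge).exists
    simp [wseq, swp, hk, h2] at h1
  · rw [goes_cls xid (yid k)]
    exact Filter.Eventually.of_forall fun n => ⟨rfl, rfl⟩
  · rw [sw_cls, goes_cls xid (yid k)]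
    exact Filter.Eventually.of_forall fun n => ⟨by rw [swp_dom]; rfl, by rw [swp_rg]; rfl⟩

theorem only_two (hD : ∀ n : ℕ, D ≠ pure n) {k : ℕ} (hk : 1 ≤ k) {a b : UPow ℕ D}
    (ha : goes a (cls D xseq) (cls D (yseq k))) (hb : goes b (cls D xseq) (cls D (yseq k)))
    (hab : a ≠ b) : sw D k a = b := by
  have hge := ev_ge hD k
  obtain ⟨f, rfl⟩ := cls_surj a
  obtain ⟨g, rfl⟩ := cls_surj b
  rw [goes_cls xid (yid k)] at ha hb
  rw [Ne, cls_eq, ← Ultrafilter.eventually_not] at hab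
  rw [sw_cls, cls_eq]
  filter_upwards [hge, ha, hb, hab] with n h1 h2 h3 h4
  have e : yseq k n = .id n k h1 := by simp [yseq, h1]
  rw [e] at h2 h3
  exact goes_swp hk h1 h2.1 h2.2 h3.1 h3.2 h4

theorem moved_fin (a : UPow ℕ D) : {k | sw D k a ≠ a}.Finite := by
  apply Set.Subsingleton.finite
  intro k hk k' hk'
  obtain ⟨f, rfl⟩ := cls_surj a
  simp only [Set.mem_ofPred_eq, Ne, sw_cls, cls_eq] at hk hk'
  rw [← Ultrafilter.eventually_not] at hk hk'
  obtain ⟨n, h1, h2⟩ := (hk.and hk').exists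
  exact swp_moved h1 h2

end ZHelp

/-- Let `D` be a nonprincipal ultrafilter on `ℕ`, `Z'` the corresponding
ultrapower of `Z`, and `x` the class modulo `D` of the sequence
`(id n 0)_{n ∈ ℕ}`.  Then `x ∈ I'`, the set of `y ∈ I'` with `(x,y)`
splitable is infinite, and no member of the term algebra of `Z'` splits all
splitable pairs `(x,y)`. -/
theorem stmt_13 (D : Ultrafilter ℕ) (hD : ∀ n : ℕ, D ≠ pure n)
    (x : UPow ℕ D)
    (hx : x = Quotient.mk ((D : Filter ℕ).productSetoid fun _ : ℕ => Atom)
      (fun n : ℕ => Atom.id n 0 (Nat.zero_le n))) :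
    mI x ∧
    {y : UPow ℕ D | mI y ∧ SplitableG x y}.Infinite ∧
    ¬ ∃ X : Set (UPow ℕ D), InTA (UPow ℕ D) X ∧
        ∀ y : UPow ℕ D, mI y → SplitableG x y → SplitsG X x y := by
  have hx' : x = ZHelp.cls D ZHelp.xseq := hx
  clear hx
  subst hx'
  refine ⟨?_, ?_, ?_⟩
  · rw [ZHelp.mI_cls]
    exact Filter.Eventually.of_forall fun n => trivial
  · refine Set.infinite_of_injective_forall_mem (f := fun k : ℕ => ZHelp.cls D (ZHelp.yseq (k + 1)))
      ?_ ?_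
    · intro k k' h
      simp only [ZHelp.cls_eq] at h
      obtain ⟨n, ⟨h1, h2⟩, h3⟩ :=
        ((h.and (ZHelp.ev_ge hD (k + 1))).and (ZHelp.ev_ge hD (k' + 1))).exists
      simp only [ZHelp.yseq, Atom.id.injEq] at h1
      omega
    · intro k
      refine ⟨?_, ZHelp.splitable hD (by omega)⟩
      rw [ZHelp.mI_cls]
      exact Filter.Eventually.of_forall fun n => trivial
  · rintro ⟨X, hX, h⟩
    obtain ⟨F, hF, hinv⟩ := ZHelp.inTA_inv hX
    have hbad : (⋃ a ∈ F, {k | ZHelp.sw D k a ≠ a}).Finite :=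
      hF.biUnion fun a _ => ZHelp.moved_fin a
    obtain ⟨k, hk1, hk2⟩ := (Set.Ici_infinite 1).exists_notMem_finite hbad
    simp only [Set.mem_iUnion, not_exists, Set.mem_ofPred_eq, not_not] at hk2
    obtain ⟨a, ha, b, hb, hga, hgb⟩ := h (ZHelp.cls D (ZHelp.yseq k))
      (by rw [ZHelp.mI_cls]; exact Filter.Eventually.of_forall fun n => trivial)
      (ZHelp.splitable hD hk1)
    have hab : a ≠ b := by rintro rfl; exact hb ha
    apply hb
    rw [← ZHelp.only_two hD hk1 hga hgb hab]
    refine hinv (ZHelp.sw D k) ?_ ?_ ?_ ?_ hk2 a ha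
    · intro a
      obtain ⟨f, rfl⟩ := ZHelp.cls_surj a
      simp only [ZHelp.sw_cls, ZHelp.swp_swp]
    · intro a
      obtain ⟨f, rfl⟩ := ZHelp.cls_surj a
      simp only [ZHelp.sw_cls, ZHelp.mI_cls, ZHelp.swp_isId]
      exact fun h => h
    · intro a b
      obtain ⟨f, rfl⟩ := ZHelp.cls_surj a
      obtain ⟨g, rfl⟩ := ZHelp.cls_surj b
      simp only [ZHelp.sw_cls, ZHelp.mC_cls]
      intro h
      filter_upwards [h] with n hn
      unfold Crel at hn ⊢
      rw [hn, ZHelp.swp_cnv]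
    · intro a b c
      obtain ⟨f, rfl⟩ := ZHelp.cls_surj a
      obtain ⟨g, rfl⟩ := ZHelp.cls_surj b
      obtain ⟨h, rfl⟩ := ZHelp.cls_surj c
      simp only [ZHelp.sw_cls, ZHelp.mP_cls]
      intro h
      filter_upwards [h] with n hn
      exact ZHelp.swp_P n k hn
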